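/- arXiv:2503.02406 — 2 statements merged into one kernel-verified Lean document; each statement's English description precedes it below -/
import Mathlib

section
/- Let n ≥ 0, s ≥ 0 and ψ ∈ [0,π] with (s,ψ) ≠ (2,0). Let (w₀,w₁) be an admissible pair in ℂ^{n+1} with |w₁|² − |w₀|² = cos(Arg(C_s(ψ))), and let γ(t) := e^{i s t/2}·(e^{−i|C_s(ψ)|t}·w₀ + e^{i|C_s(ψ)|t}·w₁). Then for all t₀, t₁ ∈ ℝ, writing T := t₁ − t₀, one has ⟨γ(t₀), γ(t₁)⟩ = e^{−i s T/2}·( cos(|C_s(ψ)|·T) − i·cos(Arg(C_s(ψ)))·sin(|C_s(ψ)|·T) ). In particular |⟨γ(t₀),γ(t₁)⟩|² = cos²(|C_s(ψ)|T) + cos²(Arg(C_s(ψ)))·sin²(|C_s(ψ)|T) ≥ cos²(Arg(C_s(ψ))). -/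
noncomputable section

open scoped Real

/-- Hermitian product on `ℂ^{n+1}`, ℂ-linear in the first argument and
conjugate-linear in the second (paper convention). -/
def herm {n : ℕ} (x y : EuclideanSpace ℂ (Fin (n + 1))) : ℂ := inner ℂ y x

/-- Norm of the point `C_s(ψ) = (−s/2 + cos ψ, sin ψ) ∈ ℝ²`, i.e.
`|C_s(ψ)| = sqrt(s²/4 + 1 − s cos ψ)`. -/
def normC (s ψ : ℝ) : ℝ := Real.sqrt (s ^ 2 / 4 + 1 - s * Real.cos ψ)

/-- Angle of `C_s(ψ)` with the positive x-axis: the unique `τ ∈ [0,π]` with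
`cos τ = (−s/2 + cos ψ)/|C_s(ψ)|`. -/
def argC (s ψ : ℝ) : ℝ := Real.arccos ((-s / 2 + Real.cos ψ) / normC s ψ)

/-- `γ` is a unit-speed magnetic geodesic of strength `s` with contact angle `ψ`,
in the paper's ambient-space formulation: `γ'' − i·s·γ' + (1 − s·cos ψ)·γ = 0`,
`|γ(0)| = 1`, `|γ'(0)| = 1`, `Re⟨γ(0),γ'(0)⟩ = 0`, `Re⟨i·γ(0),γ'(0)⟩ = cos ψ`. -/
def IsMagGeo {n : ℕ} (s ψ : ℝ) (γ : ℝ → EuclideanSpace ℂ (Fin (n + 1))) : Prop :=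
  ContDiff ℝ (⊤ : ℕ∞) γ ∧
  (∀ t : ℝ, deriv (deriv γ) t - ((s : ℂ) * Complex.I) • deriv γ t
      + ((1 : ℂ) - (s : ℂ) * (Real.cos ψ : ℂ)) • γ t = 0) ∧
  ‖γ 0‖ = 1 ∧ ‖deriv γ 0‖ = 1 ∧ (herm (γ 0) (deriv γ 0)).re = 0 ∧
  (herm (Complex.I • γ 0) (deriv γ 0)).re = Real.cos ψ

/-- The curve `γ(t) = e^{i s t/2}(e^{−i|C_s(ψ)|t} w₀ + e^{i|C_s(ψ)|t} w₁)`. -/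
def magCurve {n : ℕ} (s ψ : ℝ) (w₀ w₁ : EuclideanSpace ℂ (Fin (n + 1))) (t : ℝ) :
    EuclideanSpace ℂ (Fin (n + 1)) :=
  Complex.exp (Complex.I * s * t / 2) •
    (Complex.exp (-(Complex.I * normC s ψ * t)) • w₀ +
     Complex.exp (Complex.I * normC s ψ * t) • w₁)

/-- The Clifford torus `𝕋²_{w₀,w₁} = {λ₀ w₀ + λ₁ w₁ : |λ₀| = |λ₁| = 1}`. -/
def cliffordTorus {n : ℕ} (w₀ w₁ : EuclideanSpace ℂ (Fin (n + 1))) :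
    Set (EuclideanSpace ℂ (Fin (n + 1))) :=
  {x | ∃ l₀ l₁ : ℂ, ‖l₀‖ = 1 ∧ ‖l₁‖ = 1 ∧ x = l₀ • w₀ + l₁ • w₁}

/-!
The curve is a phase `e^{i s t/2}` times a combination of two orthogonal vectors rotating at the
opposite frequencies `±c`. Orthogonality kills the cross terms of the product of two of its
points, and the phases combine into functions of `T = t₁ - t₀` alone, leaving
`e^{-i s T/2} (‖w₀‖² e^{i c T} + ‖w₁‖² e^{-i c T})`. By Euler's formula the bracket has real part
`N cos (c T)` and imaginary part `-k sin (c T)`, where `N = ‖w₀‖² + ‖w₁‖²` and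
`k = ‖w₁‖² - ‖w₀‖²`. As `|k| ≤ N`, its modulus is at least `|k|`.
-/

open scoped ComplexConjugate

lemma inner_smul_add_smul_of_inner_eq_zero {𝕜 E : Type*} [RCLike 𝕜] [SeminormedAddCommGroup E]
    [InnerProductSpace 𝕜 E] {w₀ w₁ : E} (h : inner 𝕜 w₀ w₁ = 0) (a₀ a₁ b₀ b₁ : 𝕜) :
    inner 𝕜 (a₀ • w₀ + a₁ • w₁) (b₀ • w₀ + b₁ • w₁) =
      conj a₀ * b₀ * (‖w₀‖ : 𝕜) ^ 2 + conj a₁ * b₁ * (‖w₁‖ : 𝕜) ^ 2 := by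
  have h' : inner 𝕜 w₁ w₀ = 0 := inner_eq_zero_symm.mp h
  simp only [inner_add_left, inner_add_right, inner_smul_left, inner_smul_right, h, h',
    inner_self_eq_norm_sq_to_K]
  ring

lemma conj_exp_mul_exp (z w : ℂ) :
    conj (Complex.exp z) * Complex.exp w = Complex.exp (conj z + w) := by
  rw [← Complex.exp_conj, ← Complex.exp_add]

lemma exp_mul_I_mul_add_exp_neg_mul_I_mul (z p q : ℂ) :
    Complex.exp (z * Complex.I) * p + Complex.exp (-z * Complex.I) * q =
      (p + q) * Complex.cos z - Complex.I * (q - p) * Complex.sin z := by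
  rw [Complex.exp_mul_I, Complex.exp_mul_I, Complex.cos_neg, Complex.sin_neg]
  ring

lemma norm_ofReal_sub_I_mul_ofReal_sq (x y : ℝ) :
    ‖(x : ℂ) - Complex.I * y‖ ^ 2 = x ^ 2 + y ^ 2 := by
  rw [← neg_sq y, ← Complex.normSq_add_mul_I, Complex.normSq_eq_norm_sq, Complex.ofReal_neg,
    neg_mul, ← sub_eq_add_neg, mul_comm]

lemma sq_le_sq_mul_cos_sq_add_sq_mul_sin_sq {k N : ℝ} (h : k ^ 2 ≤ N ^ 2) (θ : ℝ) :
    k ^ 2 ≤ N ^ 2 * Real.cos θ ^ 2 + k ^ 2 * Real.sin θ ^ 2 :=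
  calc
    k ^ 2 = k ^ 2 * Real.cos θ ^ 2 + k ^ 2 * Real.sin θ ^ 2 := by
      rw [← mul_add, Real.cos_sq_add_sin_sq, mul_one]
    _ ≤ N ^ 2 * Real.cos θ ^ 2 + k ^ 2 * Real.sin θ ^ 2 := by gcongr

/-- The curve `t ↦ e^{i s t/2} (e^{-i c t} w₀ + e^{i c t} w₁)`, which moves in the torus spanned by
`w₀` and `w₁` with the two frequencies `s/2 ± c`. It is `magCurve` with `c` in place of
`|C_s(ψ)|`, in an arbitrary complex vector space. -/
def twoFrequencyCurve {E : Type*} [AddCommGroup E] [Module ℂ E] (s c : ℝ) (w₀ w₁ : E) (t : ℝ) :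
    E :=
  Complex.exp (Complex.I * s * t / 2) •
    (Complex.exp (-(Complex.I * c * t)) • w₀ + Complex.exp (Complex.I * c * t) • w₁)

section TwoFrequencyCurve

variable {E : Type*} [SeminormedAddCommGroup E] [InnerProductSpace ℂ E] {w₀ w₁ : E}

lemma inner_twoFrequencyCurve (s c : ℝ) (h : inner ℂ w₀ w₁ = 0) (t₀ t₁ : ℝ) :
    inner ℂ (twoFrequencyCurve s c w₀ w₁ t₁) (twoFrequencyCurve s c w₀ w₁ t₀) =
      Complex.exp (-(Complex.I * s * (t₁ - t₀) / 2)) *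
        (((‖w₀‖ ^ 2 + ‖w₁‖ ^ 2 : ℝ) : ℂ) * (Real.cos (c * (t₁ - t₀)) : ℂ) -
          Complex.I * ((‖w₁‖ ^ 2 - ‖w₀‖ ^ 2 : ℝ) : ℂ) * (Real.sin (c * (t₁ - t₀)) : ℂ)) := by
  have phase : conj (Complex.exp (Complex.I * s * t₁ / 2)) * Complex.exp (Complex.I * s * t₀ / 2) =
      Complex.exp (-(Complex.I * s * (t₁ - t₀) / 2)) := by
    rw [conj_exp_mul_exp]
    simp only [map_mul, map_div₀, Complex.conj_I, Complex.conj_ofReal, map_ofNat]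
    ring_nf
  have phase₀ : conj (Complex.exp (-(Complex.I * c * t₁))) * Complex.exp (-(Complex.I * c * t₀)) =
      Complex.exp (c * (t₁ - t₀) * Complex.I) := by
    rw [conj_exp_mul_exp]
    simp only [map_neg, map_mul, Complex.conj_I, Complex.conj_ofReal]
    ring_nf
  have phase₁ : conj (Complex.exp (Complex.I * c * t₁)) * Complex.exp (Complex.I * c * t₀) =
      Complex.exp (-(c * (t₁ - t₀)) * Complex.I) := by
    rw [conj_exp_mul_exp]
    simp only [map_mul, Complex.conj_I, Complex.conj_ofReal]
    ring_nf
  rw [twoFrequencyCurve, twoFrequencyCurve, inner_smul_left, inner_smul_right, ← mul_assoc, phase,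
    inner_smul_add_smul_of_inner_eq_zero h, phase₀, phase₁]
  push_cast
  rw [← exp_mul_I_mul_add_exp_neg_mul_I_mul]
  -- The norms are cast by `RCLike.ofReal` on the left and by `Complex.ofReal` on the right.
  rfl

lemma norm_inner_twoFrequencyCurve_sq (s c : ℝ) (h : inner ℂ w₀ w₁ = 0) (t₀ t₁ : ℝ) :
    ‖inner ℂ (twoFrequencyCurve s c w₀ w₁ t₁) (twoFrequencyCurve s c w₀ w₁ t₀)‖ ^ 2 =
      (‖w₀‖ ^ 2 + ‖w₁‖ ^ 2) ^ 2 * Real.cos (c * (t₁ - t₀)) ^ 2 +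
        (‖w₁‖ ^ 2 - ‖w₀‖ ^ 2) ^ 2 * Real.sin (c * (t₁ - t₀)) ^ 2 := by
  have norm_phase : ‖Complex.exp (-(Complex.I * s * (t₁ - t₀) / 2))‖ = 1 := by
    simp [Complex.norm_exp]
  rw [inner_twoFrequencyCurve s c h, norm_mul, norm_phase, one_mul, mul_assoc Complex.I,
    ← Complex.ofReal_mul, ← Complex.ofReal_mul, norm_ofReal_sub_I_mul_ofReal_sq, mul_pow, mul_pow]

theorem stmt_3_general (s c : ℝ) (h : inner ℂ w₀ w₁ = 0) (t₀ t₁ : ℝ) :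
    inner ℂ (twoFrequencyCurve s c w₀ w₁ t₁) (twoFrequencyCurve s c w₀ w₁ t₀) =
        Complex.exp (-(Complex.I * s * (t₁ - t₀) / 2)) *
          (((‖w₀‖ ^ 2 + ‖w₁‖ ^ 2 : ℝ) : ℂ) * (Real.cos (c * (t₁ - t₀)) : ℂ) -
            Complex.I * ((‖w₁‖ ^ 2 - ‖w₀‖ ^ 2 : ℝ) : ℂ) * (Real.sin (c * (t₁ - t₀)) : ℂ)) ∧
      ‖inner ℂ (twoFrequencyCurve s c w₀ w₁ t₁) (twoFrequencyCurve s c w₀ w₁ t₀)‖ ^ 2 =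
        (‖w₀‖ ^ 2 + ‖w₁‖ ^ 2) ^ 2 * Real.cos (c * (t₁ - t₀)) ^ 2 +
          (‖w₁‖ ^ 2 - ‖w₀‖ ^ 2) ^ 2 * Real.sin (c * (t₁ - t₀)) ^ 2 ∧
      (‖w₁‖ ^ 2 - ‖w₀‖ ^ 2) ^ 2 ≤
        ‖inner ℂ (twoFrequencyCurve s c w₀ w₁ t₁) (twoFrequencyCurve s c w₀ w₁ t₀)‖ ^ 2 := by
  have sq_diff_le_sq_sum : (‖w₁‖ ^ 2 - ‖w₀‖ ^ 2) ^ 2 ≤ (‖w₀‖ ^ 2 + ‖w₁‖ ^ 2) ^ 2 := by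
    linear_combination 4 * mul_nonneg (sq_nonneg ‖w₀‖) (sq_nonneg ‖w₁‖)
  refine ⟨inner_twoFrequencyCurve s c h t₀ t₁, norm_inner_twoFrequencyCurve_sq s c h t₀ t₁, ?_⟩
  rw [norm_inner_twoFrequencyCurve_sq s c h]
  exact sq_le_sq_mul_cos_sq_add_sq_mul_sin_sq sq_diff_le_sq_sum _

end TwoFrequencyCurve

/-- Hermitian product of two points of the magnetic geodesic
`magCurve s ψ w₀ w₁`, together with its absolute value squared and the
resulting lower bound `cos²(Arg(C_s(ψ)))`. -/
theorem stmt_3 {n : ℕ} (s ψ : ℝ) (hs : 0 ≤ s) (hψ : ψ ∈ Set.Icc 0 π)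
    (hne : (s, ψ) ≠ (2, 0))
    (w₀ w₁ : EuclideanSpace ℂ (Fin (n + 1)))
    (hadm : herm w₀ w₁ = 0 ∧ ‖w₀‖ ^ 2 + ‖w₁‖ ^ 2 = 1)
    (hwidth : ‖w₁‖ ^ 2 - ‖w₀‖ ^ 2 = Real.cos (argC s ψ)) :
    ∀ t₀ t₁ : ℝ,
      herm (magCurve s ψ w₀ w₁ t₀) (magCurve s ψ w₀ w₁ t₁) =
        Complex.exp (-(Complex.I * s * (t₁ - t₀) / 2)) *
          ((Real.cos (normC s ψ * (t₁ - t₀)) : ℂ) -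
            Complex.I * (Real.cos (argC s ψ) : ℂ) *
              (Real.sin (normC s ψ * (t₁ - t₀)) : ℂ)) ∧
      ‖herm (magCurve s ψ w₀ w₁ t₀) (magCurve s ψ w₀ w₁ t₁)‖ ^ 2 =
        Real.cos (normC s ψ * (t₁ - t₀)) ^ 2 +
          Real.cos (argC s ψ) ^ 2 * Real.sin (normC s ψ * (t₁ - t₀)) ^ 2 ∧
      Real.cos (argC s ψ) ^ 2 ≤
        ‖herm (magCurve s ψ w₀ w₁ t₀) (magCurve s ψ w₀ w₁ t₁)‖ ^ 2 := by
  simpa only [hadm.2, hwidth, Complex.ofReal_one, one_pow, one_mul] using!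
    stmt_3_general s (normC s ψ) (inner_eq_zero_symm.mp hadm.1)
end
end

section
/- Let n ≥ 0 and s = 2, and let q₀, q₁ be points on the unit sphere S^{2n+1} ⊂ ℂ^{n+1}. Then q₀ and q₁ are connected by a unit-speed magnetic geodesic of strength 2 (i.e. there exist ψ ∈ [0,π], a unit-speed magnetic geodesic γ of strength 2 with contact angle ψ, and t₀, t₁ ∈ ℝ with γ(t₀) = q₀, γ(t₁) = q₁) if and only if ⟨q₀, q₁⟩ ≠ 0. (Strength s = 2 corresponds to the Mañé critical energy k = 1/8 of the magnetic system (S^{2n+1}, g, dα).) -/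
noncomputable section

open scoped Real

/-! The substitution `γ(t) = e^{ist/2} β(t)` turns the magnetic geodesic equation into the harmonic
oscillator `β'' = -|C_s(ψ)|² β`. Solving it, the Hermitian product of two points of a geodesic
depends only on the elapsed time `τ` between them:
`e^{isτ/2} (cos(ωτ) + i (cos ψ - s/2) sin(ωτ)/ω)` with `ω = |C_s(ψ)|`. Conversely, a geodesic of
contact angle `ψ` joins `q₀` to `q₁` in time `τ` as soon as their product has this value and
`sin(ωτ)/ω ≠ 0`. For `s = 2` one has `cos ψ - s/2 = -ω²/2`, so the value never vanishes, and it
remains to reach every `z` in the punctured closed unit disc. For `|z| < 1`, keep the modulus equal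
to `|z|` while letting `ω → 0`: the elapsed time tends to infinity, and so every argument is
attained. -/

open Set

/-! ### Harmonic oscillator -/

/-- The solution `sin (ω t) / ω` of `f'' = -ω² f` with `f 0 = 0` and `f' 0 = 1`. Writing it with
`Real.sinc` makes it equal to `t`, as it should be, when `ω = 0`. -/
def oscSin (ω t : ℝ) : ℝ := t * Real.sinc (ω * t)

lemma oscSin_zero_left (t : ℝ) : oscSin 0 t = t := by simp [oscSin]

lemma oscSin_zero_right (ω : ℝ) : oscSin ω 0 = 0 := by simp [oscSin]

lemma oscSin_of_ne_zero {ω : ℝ} (hω : ω ≠ 0) (t : ℝ) : oscSin ω t = Real.sin (ω * t) / ω := by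
  rcases eq_or_ne t 0 with rfl | ht
  · simp [oscSin]
  · rw [oscSin, Real.sinc_of_ne_zero (mul_ne_zero hω ht)]
    field_simp

lemma mul_oscSin (ω t : ℝ) : ω * oscSin ω t = Real.sin (ω * t) := by
  rcases eq_or_ne ω 0 with rfl | hω
  · simp
  · rw [oscSin_of_ne_zero hω, mul_div_cancel₀ _ hω]

lemma cos_sq_add_sq_mul_oscSin_sq (ω t : ℝ) :
    Real.cos (ω * t) ^ 2 + ω ^ 2 * oscSin ω t ^ 2 = 1 := by
  rw [← mul_pow, mul_oscSin, Real.cos_sq_add_sin_sq]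

lemma oscSin_sub (ω t u : ℝ) :
    oscSin ω (t - u) = oscSin ω t * Real.cos (ω * u) - Real.cos (ω * t) * oscSin ω u := by
  rcases eq_or_ne ω 0 with rfl | hω
  · simp [oscSin_zero_left]
  · simp only [oscSin_of_ne_zero hω, mul_sub, Real.sin_sub]
    ring

lemma cos_mul_sub (ω t u : ℝ) :
    Real.cos (ω * (t - u)) =
      Real.cos (ω * t) * Real.cos (ω * u) + ω ^ 2 * (oscSin ω t * oscSin ω u) := by
  rw [mul_sub, Real.cos_sub, ← mul_oscSin, ← mul_oscSin]
  ring

lemma contDiff_oscSin (ω : ℝ) {n : WithTop ℕ∞} : ContDiff ℝ n (oscSin ω) := by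
  rcases eq_or_ne ω 0 with rfl | hω
  · simp only [funext oscSin_zero_left]
    fun_prop
  · simp only [funext (oscSin_of_ne_zero hω)]
    fun_prop

lemma hasDerivAt_oscSin (ω t : ℝ) : HasDerivAt (oscSin ω) (Real.cos (ω * t)) t := by
  rcases eq_or_ne ω 0 with rfl | hω
  · simpa [funext oscSin_zero_left] using hasDerivAt_id' t
  · simp only [funext (oscSin_of_ne_zero hω)]
    exact (((hasDerivAt_id' t).const_mul ω).sin.div_const ω).congr_deriv (by field_simp)

lemma hasDerivAt_cos_mul (ω t : ℝ) :
    HasDerivAt (fun t ↦ Real.cos (ω * t)) (-(ω ^ 2 * oscSin ω t)) t := by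
  convert ((hasDerivAt_id' t).const_mul ω).cos using 1
  rw [← mul_oscSin]
  ring

lemma eq_cos_smul_add_oscSin_smul {E : Type*} [NormedAddCommGroup E] [NormedSpace ℝ E]
    {ω : ℝ} {f f' : ℝ → E} (hf : ∀ t, HasDerivAt f (f' t) t)
    (hf' : ∀ t, HasDerivAt f' (-(ω ^ 2 • f t)) t) (t : ℝ) :
    f t = Real.cos (ω * t) • f 0 + oscSin ω t • f' 0 := by
  let A t := Real.cos (ω * t) • f t - oscSin ω t • f' t
  let B t := (ω ^ 2 * oscSin ω t) • f t + Real.cos (ω * t) • f' t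
  have hA t : HasDerivAt A 0 t := by
    convert ((hasDerivAt_cos_mul ω t).fun_smul (hf t)).fun_sub
      ((hasDerivAt_oscSin ω t).fun_smul (hf' t)) using 1
    module
  have hB t : HasDerivAt B 0 t := by
    convert (((hasDerivAt_oscSin ω t).const_mul (ω ^ 2)).fun_smul (hf t)).fun_add
      ((hasDerivAt_cos_mul ω t).fun_smul (hf' t)) using 1
    module
  have hA0 : A t = f 0 := by
    simpa [A, oscSin_zero_right] using
      is_const_of_deriv_eq_zero (fun t ↦ (hA t).differentiableAt) (fun t ↦ (hA t).deriv) t 0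
  have hB0 : B t = f' 0 := by
    simpa [B, oscSin_zero_right] using
      is_const_of_deriv_eq_zero (fun t ↦ (hB t).differentiableAt) (fun t ↦ (hB t).deriv) t 0
  rw [← hA0, ← hB0]
  simp only [A, B]
  match_scalars
  · linear_combination -cos_sq_add_sq_mul_oscSin_sq ω t
  · ring

/-! ### Oscillators in a rotating frame -/

section RotatingOscillator

variable {E : Type*} [NormedAddCommGroup E] [NormedSpace ℂ E]

/-- The harmonic oscillation of frequency `ω` with initial position `q` and velocity `b`, viewed
in a frame rotating with angular velocity `κ`. -/
def rotatingOsc (κ ω : ℝ) (q b : E) (t : ℝ) : E :=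
  Complex.exp (κ * t * Complex.I) •
    ((Real.cos (ω * t) : ℂ) • q + (oscSin ω t : ℂ) • b)

lemma rotatingOsc_zero (κ ω : ℝ) (q b : E) : rotatingOsc κ ω q b 0 = q := by
  simp [rotatingOsc, oscSin_zero_right]

lemma hasDerivAt_exp_mul_I (κ t : ℝ) :
    HasDerivAt (fun t : ℝ ↦ Complex.exp (κ * t * Complex.I))
      (κ * Complex.I * Complex.exp (κ * t * Complex.I)) t := by
  convert (((hasDerivAt_id' t).ofReal_comp.const_mul (κ : ℂ)).mul_const Complex.I).cexp using 1
  push_cast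
  ring

lemma hasDerivAt_rotatingOsc (κ ω : ℝ) (q b : E) (t : ℝ) :
    HasDerivAt (rotatingOsc κ ω q b)
      (rotatingOsc κ ω ((κ * Complex.I) • q + b) ((κ * Complex.I) • b - (ω : ℂ) ^ 2 • q) t) t := by
  refine ((hasDerivAt_exp_mul_I κ t).fun_smul
    (((hasDerivAt_cos_mul ω t).ofReal_comp.smul_const q).fun_add
      ((hasDerivAt_oscSin ω t).ofReal_comp.smul_const b))).congr_deriv ?_
  rw [rotatingOsc]
  push_cast
  module

lemma contDiff_rotatingOsc (κ ω : ℝ) (q b : E) {n : WithTop ℕ∞} :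
    ContDiff ℝ n (rotatingOsc κ ω q b) := by
  have hcos : ContDiff ℝ n fun t : ℝ ↦ (Real.cos (ω * t) : ℂ) :=
    Complex.ofRealCLM.contDiff.comp (by fun_prop : ContDiff ℝ n fun t ↦ Real.cos (ω * t))
  have hsin : ContDiff ℝ n fun t : ℝ ↦ (oscSin ω t : ℂ) :=
    Complex.ofRealCLM.contDiff.comp (contDiff_oscSin ω)
  have hexp : ContDiff ℝ n fun t : ℝ ↦ Complex.exp (κ * t * Complex.I) :=
    ((contDiff_const.mul Complex.ofRealCLM.contDiff).mul contDiff_const).cexp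
  exact hexp.smul ((hcos.smul contDiff_const).add (hsin.smul contDiff_const))

lemma eq_rotatingOsc {κ ω : ℝ} {f f' : ℝ → E} (hf : ∀ t, HasDerivAt f (f' t) t)
    (hf' : ∀ t, HasDerivAt f'
      ((2 * κ * Complex.I) • f' t - ((ω : ℂ) ^ 2 - (κ : ℂ) ^ 2) • f t) t) (t : ℝ) :
    f t = rotatingOsc κ ω (f 0) (f' 0 - (κ * Complex.I) • f 0) t := by
  let e (t : ℝ) : ℂ := Complex.exp ((-κ : ℝ) * t * Complex.I)
  have hg t : HasDerivAt (fun t ↦ e t • f t) (e t • (f' t - (κ * Complex.I) • f t)) t := by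
    convert (hasDerivAt_exp_mul_I (-κ) t).fun_smul (hf t) using 1
    simp only [e]
    push_cast
    module
  have hg' t : HasDerivAt (fun t ↦ e t • (f' t - (κ * Complex.I) • f t))
      (-(ω ^ 2 • e t • f t)) t := by
    convert (hasDerivAt_exp_mul_I (-κ) t).fun_smul
      ((hf' t).fun_sub ((hf t).fun_const_smul (κ * Complex.I))) using 1
    rw [← Complex.coe_smul]
    simp only [e]
    push_cast
    match_scalars
    · linear_combination (-κ ^ 2 * Complex.exp (-κ * t * Complex.I)) * Complex.I_sq
    · ring
  have hsol := eq_cos_smul_add_oscSin_smul hg hg' t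
  have hexp : Complex.exp (κ * t * Complex.I) * e t = 1 := by
    simp [e, ← Complex.exp_add]
  have he0 : e 0 = 1 := by simp [e]
  rw [he0, one_smul, one_smul] at hsol
  rw [rotatingOsc, Complex.coe_smul, Complex.coe_smul, ← hsol, smul_smul, hexp, one_smul]

end RotatingOscillator

/-! ### Magnetic geodesics -/

lemma normC_sq (s ψ : ℝ) : normC s ψ ^ 2 = s ^ 2 / 4 + 1 - s * Real.cos ψ :=
  Real.sq_sqrt <| by nlinarith [sq_nonneg (s / 2 - Real.cos ψ), Real.cos_sq_le_one ψ]

lemma ofReal_normC_sq (s ψ : ℝ) :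
    (normC s ψ : ℂ) ^ 2 = s ^ 2 / 4 + 1 - s * Real.cos ψ :=
  mod_cast normC_sq s ψ

/-- The inner product `inner ℂ (γ t) (γ (t + τ))` along any magnetic geodesic `γ` of strength `s`
and contact angle `ψ`. -/
def magneticOverlap (s ψ τ : ℝ) : ℂ :=
  Complex.exp ((s / 2 : ℝ) * τ * Complex.I) *
    (Real.cos (normC s ψ * τ) + (Real.cos ψ - s / 2 : ℝ) * oscSin (normC s ψ) τ * Complex.I)

lemma magneticOverlap_ne_zero {s : ℝ} (hs : 2 ≤ |s|) (ψ τ : ℝ) : magneticOverlap s ψ τ ≠ 0 := by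
  intro h
  have hz := (mul_eq_zero.1 h).resolve_left (Complex.exp_ne_zero _)
  have hcos : Real.cos (normC s ψ * τ) = 0 := by
    simpa [-Complex.ofReal_cos] using congrArg Complex.re hz
  have hsin : (Real.cos ψ - s / 2) * oscSin (normC s ψ) τ = 0 := by
    simpa [-Complex.ofReal_cos, -Complex.ofReal_sub] using congrArg Complex.im hz
  have hpyth := cos_sq_add_sq_mul_oscSin_sq (normC s ψ) τ
  rw [hcos] at hpyth
  rcases mul_eq_zero.1 hsin with hψ | hS
  · have hω : normC s ψ ^ 2 ≤ 0 := by
      rw [normC_sq, sub_eq_zero.1 hψ]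
      nlinarith [sq_abs s]
    nlinarith [sq_nonneg (oscSin (normC s ψ) τ)]
  · simp [hS] at hpyth

section MagneticGeodesic

variable {E : Type*} [NormedAddCommGroup E] [InnerProductSpace ℂ E]

/-- Unit-speed magnetic geodesics of strength `s` and contact angle `ψ` on the unit sphere of a
complex inner product space. As Mathlib's inner product is conjugate-linear in the first argument,
the two real conditions on `⟨γ(0), γ'(0)⟩` combine into `inner_deriv_zero`. -/
structure IsMagneticGeodesic (s ψ : ℝ) (γ : ℝ → E) : Prop where
  contDiff : ContDiff ℝ (⊤ : ℕ∞) γ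
  ode (t : ℝ) : deriv (deriv γ) t - ((s : ℂ) * Complex.I) • deriv γ t +
    ((1 : ℂ) - (s : ℂ) * (Real.cos ψ : ℂ)) • γ t = 0
  norm_zero : ‖γ 0‖ = 1
  norm_deriv_zero : ‖deriv γ 0‖ = 1
  inner_deriv_zero : inner ℂ (γ 0) (deriv γ 0) = Real.cos ψ * Complex.I

lemma isMagGeo_iff_isMagneticGeodesic {n : ℕ} {s ψ : ℝ}
    {γ : ℝ → EuclideanSpace ℂ (Fin (n + 1))} :
    IsMagGeo s ψ γ ↔ IsMagneticGeodesic s ψ γ := by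
  have hinner : (herm (γ 0) (deriv γ 0)).re = 0 ∧
      (herm (Complex.I • γ 0) (deriv γ 0)).re = Real.cos ψ ↔
      inner ℂ (γ 0) (deriv γ 0) = Real.cos ψ * Complex.I := by
    rw [herm, herm, inner_smul_right, ← inner_conj_symm (γ 0) (deriv γ 0), Complex.ext_iff,
      Complex.conj_re, Complex.conj_im]
    simp [-Complex.ofReal_cos, -inner_conj_symm]
  rw [IsMagGeo, hinner]
  exact ⟨fun ⟨h₁, h₂, h₃, h₄, h₅⟩ ↦ ⟨h₁, h₂, h₃, h₄, h₅⟩,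
    fun ⟨h₁, h₂, h₃, h₄, h₅⟩ ↦ ⟨h₁, h₂, h₃, h₄, h₅⟩⟩

lemma IsMagneticGeodesic.eq_rotatingOsc {s ψ : ℝ} {γ : ℝ → E} (hγ : IsMagneticGeodesic s ψ γ)
    (t : ℝ) : γ t = rotatingOsc (s / 2) (normC s ψ) (γ 0)
      (deriv γ 0 - ((s / 2 : ℝ) * Complex.I) • γ 0) t := by
  have hdγ : ContDiff ℝ 1 (deriv γ) :=
    (contDiff_succ_iff_deriv.1 (contDiff_infty.1 hγ.contDiff 2 : ContDiff ℝ (1 + 1) γ)).2.2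
  refine _root_.eq_rotatingOsc (fun t ↦ (hγ.contDiff.differentiable (by simp) t).hasDerivAt)
    (fun t ↦ ?_) t
  convert (hdγ.differentiable one_ne_zero t).hasDerivAt using 1
  rw [← sub_eq_zero, ofReal_normC_sq, ← neg_eq_zero, ← hγ.ode t]
  push_cast
  module

lemma inner_swap_eq_neg_mul_I {δ : ℝ} {x y : E} (h : inner ℂ x y = δ * Complex.I) :
    inner ℂ y x = -(δ * Complex.I) := by
  rw [← inner_conj_symm, h, map_mul, Complex.conj_ofReal, Complex.conj_I, mul_neg]

lemma norm_eq_one_iff_inner_self_eq_one {x : E} : ‖x‖ = 1 ↔ inner ℂ x x = (1 : ℂ) := by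
  refine ⟨inner_self_eq_one_of_norm_eq_one, fun h ↦ ?_⟩
  rw [norm_eq_sqrt_re_inner (𝕜 := ℂ), h, RCLike.one_re, Real.sqrt_one]

lemma inner_rotatingOsc {κ ω δ : ℝ} {q b : E} (hq : inner ℂ q q = (1 : ℂ))
    (hb : inner ℂ b b = (ω : ℂ) ^ 2) (hqb : inner ℂ q b = δ * Complex.I) (t u : ℝ) :
    inner ℂ (rotatingOsc κ ω q b t) (rotatingOsc κ ω q b u) =
      Complex.exp (κ * (u - t : ℝ) * Complex.I) *
        (Real.cos (ω * (u - t)) + δ * oscSin ω (u - t) * Complex.I) := by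
  have hbq := inner_swap_eq_neg_mul_I hqb
  have hexp : Complex.exp (κ * (u - t : ℝ) * Complex.I) =
      (starRingEnd ℂ) (Complex.exp (κ * t * Complex.I)) * Complex.exp (κ * u * Complex.I) := by
    rw [← Complex.exp_conj, ← Complex.exp_add]
    congr 1
    simp only [map_mul, Complex.conj_ofReal, Complex.conj_I]
    push_cast
    ring
  rw [hexp, cos_mul_sub, oscSin_sub]
  simp only [rotatingOsc, inner_add_left, inner_add_right, inner_smul_left, inner_smul_right,
    Complex.conj_ofReal, hq, hb, hqb, hbq]
  push_cast
  ring

-- The initial conditions on the velocity `(is/2) q + b`, in terms of its part `b` left after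
-- subtracting the rotation of the frame.
lemma norm_add_eq_one_and_inner_add_eq_iff {s ψ : ℝ} {q b : E} (hq : inner ℂ q q = (1 : ℂ)) :
    (‖((s / 2 : ℝ) * Complex.I) • q + b‖ = 1 ∧
      inner ℂ q (((s / 2 : ℝ) * Complex.I) • q + b) = Real.cos ψ * Complex.I) ↔
    (inner ℂ b b = (normC s ψ : ℂ) ^ 2 ∧
      inner ℂ q b = (Real.cos ψ - s / 2 : ℝ) * Complex.I) := by
  have hqv : inner ℂ q (((s / 2 : ℝ) * Complex.I) • q + b) = Real.cos ψ * Complex.I ↔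
      inner ℂ q b = (Real.cos ψ - s / 2 : ℝ) * Complex.I := by
    rw [inner_add_right, inner_smul_right, hq]
    push_cast
    constructor <;> intro h <;> linear_combination h
  rw [hqv]
  refine and_congr_left fun hqb ↦ ?_
  have hbq := inner_swap_eq_neg_mul_I hqb
  rw [norm_eq_one_iff_inner_self_eq_one, ofReal_normC_sq]
  simp only [inner_add_left, inner_add_right, inner_smul_left, inner_smul_right, map_mul,
    Complex.conj_ofReal, Complex.conj_I, hq, hqb, hbq]
  push_cast
  constructor <;> intro h
  · linear_combination h + (s * Complex.cos ψ - s ^ 2 / 4) * Complex.I_sq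
  · linear_combination h - (s * Complex.cos ψ - s ^ 2 / 4) * Complex.I_sq

lemma isMagneticGeodesic_rotatingOsc {s ψ : ℝ} {q b : E} (hq : ‖q‖ = 1)
    (hb : inner ℂ b b = (normC s ψ : ℂ) ^ 2)
    (hqb : inner ℂ q b = (Real.cos ψ - s / 2 : ℝ) * Complex.I) :
    IsMagneticGeodesic s ψ (rotatingOsc (s / 2) (normC s ψ) q b) := by
  have hderiv (q b : E) : deriv (rotatingOsc (s / 2) (normC s ψ) q b) = _ :=
    funext fun t ↦ (hasDerivAt_rotatingOsc (s / 2) (normC s ψ) q b t).deriv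
  have hv :=
    (norm_add_eq_one_and_inner_add_eq_iff (inner_self_eq_one_of_norm_eq_one hq)).2 ⟨hb, hqb⟩
  refine ⟨contDiff_rotatingOsc _ _ _ _, fun t ↦ ?_, ?_, ?_, ?_⟩
  · rw [hderiv, hderiv, ofReal_normC_sq]
    simp only [rotatingOsc]
    push_cast
    set e := Complex.exp (s / 2 * t * Complex.I)
    match_scalars
    · linear_combination (-s ^ 2 / 4 * e * Complex.cos (normC s ψ * t)) * Complex.I_sq
    · linear_combination (-s ^ 2 / 4 * e * oscSin (normC s ψ) t) * Complex.I_sq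
  · rwa [rotatingOsc_zero]
  · rw [hderiv, rotatingOsc_zero, hv.1]
  · rw [hderiv, rotatingOsc_zero, rotatingOsc_zero, hv.2]

theorem IsMagneticGeodesic.inner_eq_magneticOverlap {s ψ : ℝ} {γ : ℝ → E}
    (hγ : IsMagneticGeodesic s ψ γ) (t₀ t₁ : ℝ) :
    inner ℂ (γ t₀) (γ t₁) = magneticOverlap s ψ (t₁ - t₀) := by
  have hq : inner ℂ (γ 0) (γ 0) = (1 : ℂ) := inner_self_eq_one_of_norm_eq_one hγ.norm_zero
  obtain ⟨hb, hqb⟩ := (norm_add_eq_one_and_inner_add_eq_iff (s := s) (ψ := ψ)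
    (b := deriv γ 0 - ((s / 2 : ℝ) * Complex.I) • γ 0) hq).1
    (by rw [add_sub_cancel]; exact ⟨hγ.norm_deriv_zero, hγ.inner_deriv_zero⟩)
  rw [hγ.eq_rotatingOsc t₀, hγ.eq_rotatingOsc t₁, inner_rotatingOsc hq hb hqb, magneticOverlap]

lemma inner_inv_smul_sub_smul {ω δ C S : ℝ} {p q : E} (hp : inner ℂ p p = (1 : ℂ))
    (hq : inner ℂ q q = (1 : ℂ)) (hqp : inner ℂ q p = C + δ * S * Complex.I)
    (hCS : C ^ 2 + ω ^ 2 * S ^ 2 = 1) (hS : S ≠ 0) :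
    inner ℂ ((S : ℂ)⁻¹ • (p - (C : ℂ) • q)) ((S : ℂ)⁻¹ • (p - (C : ℂ) • q)) = (ω : ℂ) ^ 2 ∧
      inner ℂ q ((S : ℂ)⁻¹ • (p - (C : ℂ) • q)) = δ * Complex.I := by
  have hpq : inner ℂ p q = C - δ * S * Complex.I := by
    rw [← inner_conj_symm, hqp]
    simp [sub_eq_add_neg]
  have hCS' : (C : ℂ) ^ 2 + (ω : ℂ) ^ 2 * S ^ 2 = 1 := mod_cast hCS
  have hS' : (S : ℂ) ≠ 0 := mod_cast hS
  simp only [inner_sub_left, inner_sub_right, inner_smul_left, inner_smul_right, map_inv₀,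
    Complex.conj_ofReal, hp, hq, hqp, hpq]
  constructor <;> field_simp
  · linear_combination -hCS'
  · ring

theorem exists_isMagneticGeodesic_of_inner_eq_magneticOverlap {s ψ τ : ℝ} {q₀ q₁ : E}
    (hq₀ : ‖q₀‖ = 1) (hq₁ : ‖q₁‖ = 1) (hS : oscSin (normC s ψ) τ ≠ 0)
    (h : inner ℂ q₀ q₁ = magneticOverlap s ψ τ) :
    ∃ γ : ℝ → E, IsMagneticGeodesic s ψ γ ∧ γ 0 = q₀ ∧ γ τ = q₁ := by
  set e : ℂ := Complex.exp ((s / 2 : ℝ) * τ * Complex.I) with he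
  have he_norm : ‖e‖ = 1 := by rw [he, ← Complex.ofReal_mul, Complex.norm_exp_ofReal_mul_I]
  have he_ne : e ≠ 0 := Complex.exp_ne_zero _
  set C := Real.cos (normC s ψ * τ)
  set S := oscSin (normC s ψ) τ
  have hp : inner ℂ (e⁻¹ • q₁) (e⁻¹ • q₁) = (1 : ℂ) :=
    inner_self_eq_one_of_norm_eq_one (by simp [norm_smul, he_norm, hq₁])
  have hqp : inner ℂ q₀ (e⁻¹ • q₁) = C + (Real.cos ψ - s / 2 : ℝ) * S * Complex.I := by
    rw [inner_smul_right, h, magneticOverlap, inv_mul_cancel_left₀ he_ne]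
  obtain ⟨hbb, hqb⟩ := inner_inv_smul_sub_smul hp (inner_self_eq_one_of_norm_eq_one hq₀) hqp
    (cos_sq_add_sq_mul_oscSin_sq (normC s ψ) τ) hS
  refine ⟨_, isMagneticGeodesic_rotatingOsc hq₀ hbb hqb, rotatingOsc_zero _ _ _ _, ?_⟩
  rw [rotatingOsc, smul_inv_smul₀ (Complex.ofReal_ne_zero.2 hS), add_sub_cancel,
    smul_inv_smul₀ he_ne]

end MagneticGeodesic

/-! ### The range of the overlap at critical strength -/

lemma mul_sin_le_sin_arccos_mul_cos {r : ℝ} (hr : |r| ≤ 1) (x : ℝ) :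
    r * Real.sin x ≤ Real.sin (Real.arccos (r * Real.cos x)) := by
  rw [Real.sin_arccos]
  refine Real.le_sqrt_of_sq_le ?_
  nlinarith [Real.sin_sq_add_cos_sq x, (sq_le_one_iff_abs_le_one r).2 hr]

lemma exists_mul_sin_mul_add_eq_arccos_mul_sin {r c : ℝ} (hr₀ : 0 < r) (hr₁ : r < 1)
    (hc : π / 2 ≤ 2 * (r * (π / 2 + c))) :
    ∃ x ∈ Ioc 0 (π / 2), 2 * (r * Real.sin x * (x + c)) =
      Real.arccos (r * Real.cos x) * Real.sin (Real.arccos (r * Real.cos x)) := by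
  let f x := 2 * (r * Real.sin x * (x + c)) -
    Real.arccos (r * Real.cos x) * Real.sin (Real.arccos (r * Real.cos x))
  have hf : Continuous f := by
    have := Real.continuous_arccos
    fun_prop
  have hf₀ : f 0 < 0 := by
    have hθ : 0 < Real.arccos r := Real.arccos_pos.2 hr₁
    have hθπ : Real.arccos r < π := (Real.arccos_le_pi_div_two.2 hr₀.le).trans_lt (by
      linarith [Real.pi_pos])
    simpa [f] using mul_pos hθ (Real.sin_pos_of_pos_of_lt_pi hθ hθπ)
  have hf₁ : 0 ≤ f (π / 2) := by simpa [f] using hc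
  obtain ⟨x, ⟨hx₀, hx₁⟩, hx⟩ :=
    intermediate_value_Ioc Real.pi_div_two_pos.le hf.continuousOn ⟨hf₀, hf₁⟩
  exact ⟨x, ⟨hx₀, hx₁⟩, sub_eq_zero.1 hx⟩

lemma exists_cos_eq_mul_cos_and_mul_sin_eq {r c : ℝ} (hr₀ : 0 < r) (hr₁ : r < 1)
    (hc : π / 2 ≤ 2 * (r * (π / 2 + c))) :
    ∃ a ∈ Ioc (0 : ℝ) 1, ∃ x, 0 < Real.sin (2 * a * (x + c)) ∧
      Real.cos (2 * a * (x + c)) = r * Real.cos x ∧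
      a * Real.sin (2 * a * (x + c)) = r * Real.sin x := by
  obtain ⟨x, ⟨hx₀, hx₁⟩, hx⟩ := exists_mul_sin_mul_add_eq_arccos_mul_sin hr₀ hr₁ hc
  set θ := Real.arccos (r * Real.cos x)
  have hsinx : 0 < Real.sin x := Real.sin_pos_of_pos_of_lt_pi hx₀ (by linarith [Real.pi_pos])
  have hle : r * Real.sin x ≤ Real.sin θ :=
    mul_sin_le_sin_arccos_mul_cos (abs_le.2 ⟨by linarith, hr₁.le⟩) x
  have hsinθ : 0 < Real.sin θ := (mul_pos hr₀ hsinx).trans_le hle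
  have hcosθ : Real.cos θ = r * Real.cos x :=
    Real.cos_arccos (by nlinarith [Real.neg_one_le_cos x]) (by nlinarith [Real.cos_le_one x])
  have haθ : 2 * (r * Real.sin x / Real.sin θ) * (x + c) = θ := by
    field_simp
    linarith
  refine ⟨r * Real.sin x / Real.sin θ, ⟨by positivity, (div_le_one hsinθ).2 hle⟩, x, ?_⟩
  rw [haθ]
  exact ⟨hsinθ, hcosθ, div_mul_cancel₀ _ hsinθ.ne'⟩

lemma exists_exp_mul_cos_sub_mul_sin_eq {z : ℂ} (hz : z ≠ 0) (hz₁ : ‖z‖ < 1) :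
    ∃ a ∈ Ioc (0 : ℝ) 1, ∃ τ : ℝ, Real.sin (2 * a * τ) ≠ 0 ∧
      Complex.exp (τ * Complex.I) *
        (Real.cos (2 * a * τ) - a * Real.sin (2 * a * τ) * Complex.I) = z := by
  set r := ‖z‖
  have hr : 0 < r := norm_pos_iff.2 hz
  obtain ⟨N, hN⟩ := exists_nat_ge ((π / 2 / (2 * r) - π / 2 - z.arg) / (2 * π))
  have hc : π / 2 ≤ 2 * (r * (π / 2 + (z.arg + N * (2 * π)))) := by
    rw [div_le_iff₀ Real.two_pi_pos, sub_sub, sub_le_iff_le_add, div_le_iff₀ (by positivity)] at hN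
    linarith
  obtain ⟨a, ha, x, hsin, hcos_eq, hsin_eq⟩ :=
    exists_cos_eq_mul_cos_and_mul_sin_eq hr hz₁ hc
  set τ := x + (z.arg + N * (2 * π)) with hτ
  refine ⟨a, ha, τ, hsin.ne', ?_⟩
  rw [hcos_eq, ← Complex.ofReal_mul, hsin_eq]
  calc Complex.exp (τ * Complex.I) * ((r * Real.cos x : ℝ) - (r * Real.sin x : ℝ) * Complex.I)
      = r * (Complex.exp (τ * Complex.I) * Complex.exp (-x * Complex.I)) := by
        rw [Complex.exp_mul_I (-x), Complex.cos_neg, Complex.sin_neg]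
        push_cast
        ring
    _ = r * Complex.exp (z.arg * Complex.I + N * (2 * π * Complex.I)) := by
        rw [← Complex.exp_add, hτ]
        push_cast
        ring_nf
    _ = z := by
        rw [Complex.exp_add, Complex.exp_nat_mul_two_pi_mul_I, mul_one,
          Complex.norm_mul_exp_arg_mul_I]

lemma normC_two_arccos {a : ℝ} (ha : a ∈ Icc (0 : ℝ) 1) :
    normC 2 (Real.arccos (1 - 2 * a ^ 2)) = 2 * a := by
  rw [normC, Real.cos_arccos (by nlinarith [ha.1, ha.2]) (by nlinarith),
    ← Real.sqrt_sq (by linarith [ha.1] : 0 ≤ 2 * a)]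
  ring_nf

theorem exists_magneticOverlap_two_eq {z : ℂ} (hz : z ≠ 0) (hz₁ : ‖z‖ ≤ 1) :
    ∃ ψ ∈ Icc 0 π, ∃ τ, oscSin (normC 2 ψ) τ ≠ 0 ∧ magneticOverlap 2 ψ τ = z := by
  suffices h : ∃ a ∈ Icc (0 : ℝ) 1, ∃ τ : ℝ, oscSin (2 * a) τ ≠ 0 ∧
      Complex.exp (τ * Complex.I) *
        (Real.cos (2 * a * τ) - a * Real.sin (2 * a * τ) * Complex.I) = z by
    obtain ⟨a, ha, τ, hS, h⟩ := h
    refine ⟨Real.arccos (1 - 2 * a ^ 2), ⟨Real.arccos_nonneg _, Real.arccos_le_pi _⟩, τ, ?_, ?_⟩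
    · rwa [normC_two_arccos ha]
    · rw [magneticOverlap, normC_two_arccos ha, ← h, ← mul_oscSin,
        Real.cos_arccos (by nlinarith [ha.1, ha.2]) (by nlinarith)]
      push_cast
      ring_nf
  rcases hz₁.eq_or_lt with hz₁ | hz₁
  · -- The shift by `2π` avoids the excluded elapsed time `0`.
    refine ⟨0, by simp, z.arg + 2 * π, ?_, ?_⟩
    · rw [mul_zero, oscSin_zero_left]
      linarith [Complex.neg_pi_lt_arg z, Real.pi_pos]
    · simpa [add_mul, Complex.exp_add, hz₁] using Complex.norm_mul_exp_arg_mul_I z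
  · obtain ⟨a, ha, τ, hsin, h⟩ := exists_exp_mul_cos_sub_mul_sin_eq hz hz₁
    refine ⟨a, Ioc_subset_Icc_self ha, τ, fun hS ↦ hsin ?_, h⟩
    rw [← mul_oscSin, hS, mul_zero]

theorem stmt_6_general {E : Type*} [NormedAddCommGroup E] [InnerProductSpace ℂ E] {q₀ q₁ : E}
    (hq₀ : ‖q₀‖ = 1) (hq₁ : ‖q₁‖ = 1) :
    (∃ ψ ∈ Icc (0 : ℝ) π, ∃ γ : ℝ → E,
      IsMagneticGeodesic 2 ψ γ ∧ ∃ t₀ t₁ : ℝ, γ t₀ = q₀ ∧ γ t₁ = q₁) ↔ inner ℂ q₀ q₁ ≠ 0 := by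
  constructor
  · rintro ⟨ψ, -, γ, hγ, t₀, t₁, rfl, rfl⟩
    rw [hγ.inner_eq_magneticOverlap]
    exact magneticOverlap_ne_zero (by simp) ψ _
  · intro hne
    have hle : ‖inner ℂ q₀ q₁‖ ≤ 1 := by
      simpa [hq₀, hq₁] using norm_inner_le_norm (𝕜 := ℂ) q₀ q₁
    obtain ⟨ψ, hψ, τ, hS, hz⟩ := exists_magneticOverlap_two_eq hne hle
    obtain ⟨γ, hγ, h₀, h₁⟩ :=
      exists_isMagneticGeodesic_of_inner_eq_magneticOverlap hq₀ hq₁ hS hz.symm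
    exact ⟨ψ, hψ, γ, hγ, 0, τ, h₀, h₁⟩

/-- critical case `s = 2`: two points of the unit sphere are connected
by a unit-speed magnetic geodesic of strength `2` iff `⟨q₀,q₁⟩ ≠ 0`. -/
theorem stmt_6 {n : ℕ}
    (q₀ q₁ : EuclideanSpace ℂ (Fin (n + 1)))
    (hq₀ : ‖q₀‖ = 1) (hq₁ : ‖q₁‖ = 1) :
    (∃ ψ ∈ Set.Icc (0 : ℝ) π, ∃ γ : ℝ → EuclideanSpace ℂ (Fin (n + 1)),
      IsMagGeo 2 ψ γ ∧ ∃ t₀ t₁ : ℝ, γ t₀ = q₀ ∧ γ t₁ = q₁) ↔ herm q₀ q₁ ≠ 0 := by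
  simpa only [isMagGeo_iff_isMagneticGeodesic, herm, ne_eq, inner_eq_zero_symm (x := q₁)]
    using stmt_6_general hq₀ hq₁
end
end
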